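/- Let 1 ≤ p < ∞ and for each n ∈ ℕ let X^{(n)} be a random vector in B_p^n with directional distribution C_{n,p}, and set R_n = (∏_{i=1}^n |X_i^{(n)}|)^{1/n} / ((1/n) ∑_{i=1}^n |X_i^{(n)}|^p)^{1/p}. Then the sequence (R_n)_{n∈ℕ} satisfies a large deviation principle on [0,1] with speed n and rate function I_p: for every closed set A ⊆ [0,1], limsup_{n→∞} (1/n) log P(R_n ∈ A) ≤ −inf_{θ∈A} I_p(θ), and for every open set A ⊆ [0,1], liminf_{n→∞} (1/n) log P(R_n ∈ A) ≥ −inf_{θ∈A} I_p(θ), where I_p is extended by +∞ outside (0,1). -/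

import Mathlib

open MeasureTheory ProbabilityTheory Filter Set

noncomputable section

/-- The `ℓ_p`-norm on `ℝ^n`: `‖x‖_p = (∑ |x_i|^p)^{1/p}`. -/
def pNorm (p : ℝ) {n : ℕ} (x : Fin n → ℝ) : ℝ := (∑ i, |x i| ^ p) ^ (1 / p)

/-- The unit ball `B_p^n = {x : ‖x‖_p ≤ 1}`. -/
def unitBallp (n : ℕ) (p : ℝ) : Set (Fin n → ℝ) := {x | pNorm p x ≤ 1}

/-- The unit sphere `S_p^{n-1} = {x : ‖x‖_p = 1}`. -/
def unitSpherep (n : ℕ) (p : ℝ) : Set (Fin n → ℝ) := {x | pNorm p x = 1}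

/-- The cone spanned by a set: `{r x : r ∈ [0,1], x ∈ A}`. -/
def coneOf {n : ℕ} (A : Set (Fin n → ℝ)) : Set (Fin n → ℝ) :=
  {y | ∃ r ∈ Icc (0:ℝ) 1, ∃ x ∈ A, y = r • x}

/-- `C` is the cone probability measure `C_{n,p}` on `S_p^{n-1}`: the probability measure
concentrated on the sphere with `C(A) = vol_n({r x : r ∈ [0,1], x ∈ A})/vol_n(B_p^n)` for
measurable `A ⊆ S_p^{n-1}`. -/
def IsConeMeasure (n : ℕ) (p : ℝ) (C : Measure (Fin n → ℝ)) : Prop :=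
  IsProbabilityMeasure C ∧ C (unitSpherep n p)ᶜ = 0 ∧
    ∀ A : Set (Fin n → ℝ), MeasurableSet A → A ⊆ unitSpherep n p →
      C A = volume (coneOf A) / volume (unitBallp n p)

/-- A random vector `X` (on the probability space `(Ω, P)`) has directional distribution
`C_{n,p}`: it equals in distribution `R • Z`, where `Z ∼ C_{n,p}` and `R` is an independent
random variable with values in `[0,1]` whose law has no atom at `0`.  Independence of `R`
and `Z` is encoded by taking the joint law to be the product measure `μ_R ⊗ C_{n,p}`. -/
def HasConeDirDist (n : ℕ) (p : ℝ) {Ω : Type*} [MeasurableSpace Ω] (P : Measure Ω)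
    (X : Ω → Fin n → ℝ) : Prop :=
  ∃ (μR : Measure ℝ) (C : Measure (Fin n → ℝ)),
    IsProbabilityMeasure μR ∧ μR (Icc (0:ℝ) 1)ᶜ = 0 ∧ μR {0} = 0 ∧
    IsConeMeasure n p C ∧
    Measure.map X P = Measure.map (fun rz : ℝ × (Fin n → ℝ) => rz.1 • rz.2) (μR.prod C)

/-- The digamma function `ψ = Γ'/Γ`. -/
def digammaFn (x : ℝ) : ℝ := deriv Real.Gamma x / Real.Gamma x

/-- `H(x) = ψ(x) - log x`. -/
def Hfun (x : ℝ) : ℝ := digammaFn x - Real.log x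

/-- The inverse `H⁻¹` of the increasing bijection `H : (0,∞) → (-∞,0)`. -/
def Hinv (y : ℝ) : ℝ := Function.invFunOn Hfun (Ioi 0) y

/-- The constant `m_p = (1/p)(ψ(1/p) + log p)`. -/
def mConst (p : ℝ) : ℝ := (1/p) * (digammaFn (1/p) + Real.log p)

/-- `G_p(θ) = H⁻¹(p log θ)`. -/
def Gfun (p θ : ℝ) : ℝ := Hinv (p * Real.log θ)

/-- The rate function
`I_p(θ) = [p G_p(θ) - 1] log θ + G_p(θ)[log G_p(θ) - 1] - log Γ(G_p(θ))
            + (1/p)(1 + log p) + log Γ(1/p)`. -/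
def ratefn (p θ : ℝ) : ℝ :=
  (p * Gfun p θ - 1) * Real.log θ + Gfun p θ * (Real.log (Gfun p θ) - 1)
    - Real.log (Real.Gamma (Gfun p θ)) + (1/p) * (1 + Real.log p)
    + Real.log (Real.Gamma (1/p))

/-- The ratio of the two sides of the `p`-generalized AGM inequality:
`R_n = (∏ |x_i|)^{1/n} / ((1/n) ∑ |x_i|^p)^{1/p}`. -/
def ratioAGM (p : ℝ) {n : ℕ} (x : Fin n → ℝ) : ℝ :=
  (∏ i, |x i|) ^ ((1:ℝ)/n) / ((1/(n:ℝ)) * ∑ i, |x i| ^ p) ^ (1/p)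

/-- The rate function `I_p`, extended by `+∞` outside `(0,1)` (with values in `EReal`). -/
def ratefnExt (p : ℝ) (θ : ℝ) : EReal :=
  if θ ∈ Ioo (0:ℝ) 1 then ((ratefn p θ : ℝ) : EReal) else ⊤

/-!
The ratio `R_n` is invariant under scaling, so its law does not depend on the radial part of
`X^{(n)}`, and it may be computed for the uniform distribution on the unit ball. Since `R_n` is
constant along rays, its moments are unchanged up to an explicit radial factor if the ball is
replaced by the weight `‖x‖_p ^ (n t) exp (-‖x‖_p ^ p)`; against this weight the integral of
`R_n ^ (n t)` factorises over the coordinates, and the moments become quotients of Gamma values.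

In terms of the Stirling remainder `S x = log Γ(x) - x log x + x` this gives
`n⁻¹ log E[R_n ^ (n t)] → Λ t = S ((1 + t) / p) - S (1 / p)` for `t > -1`. As `S' = H`, the slope of
`Λ` at `t = p G_p(θ) - 1` is `log θ`, and `t log θ - Λ t = I_p(θ)`. Tilting by this `t` gives the
lower bound at `θ` (Gärtner–Ellis) as well as the Chernoff upper bounds for half-lines on either
side of `exp m_p`, where the tilt vanishes. The rate at `1` is infinite because `S x → -∞` as
`x → ∞`.
-/

open scoped Topology ENNReal

section StirlingRemainder

lemma hasDerivAt_log_Gamma {x : ℝ} (hx : 0 < x) :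
    HasDerivAt (fun y => Real.log (Real.Gamma y)) (digammaFn x) x := by
  have hΓ : DifferentiableAt ℝ Real.Gamma x :=
    Real.differentiableAt_Gamma fun m => by
      have : (0 : ℝ) ≤ m := m.cast_nonneg
      linarith
  exact hΓ.hasDerivAt.log (Real.Gamma_pos_of_pos hx).ne'

lemma log_Gamma_add_one {x : ℝ} (hx : 0 < x) :
    Real.log (Real.Gamma (x + 1)) = Real.log x + Real.log (Real.Gamma x) := by
  rw [Real.Gamma_add_one hx.ne', Real.log_mul hx.ne' (Real.Gamma_pos_of_pos hx).ne']

lemma digammaFn_add_one {x : ℝ} (hx : 0 < x) : digammaFn (x + 1) = digammaFn x + x⁻¹ := by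
  have h₁ : HasDerivAt (fun y => Real.log (Real.Gamma (y + 1))) (digammaFn (x + 1)) x :=
    (hasDerivAt_log_Gamma (by linarith : 0 < x + 1)).comp_add_const x 1
  have h₂ := (Real.hasDerivAt_log hx.ne').add (hasDerivAt_log_Gamma hx)
  have heq : (fun y => Real.log (Real.Gamma (y + 1))) =ᶠ[𝓝 x]
      (Real.log + fun y => Real.log (Real.Gamma y)) := by
    filter_upwards [lt_mem_nhds hx] with y hy using log_Gamma_add_one hy
  rw [h₁.unique (h₂.congr_of_eventuallyEq heq), add_comm]

-- By the functional equation, `log x` is the slope of the convex function `log Γ` on `[x, x + 1]`.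
lemma digammaFn_le_log {x : ℝ} (hx : 0 < x) : digammaFn x ≤ Real.log x := by
  have h := Real.convexOn_log_Gamma.le_slope_of_hasDerivAt (x := x) (y := x + 1) hx
    (by simp only [mem_Ioi]; linarith) (by linarith) (hasDerivAt_log_Gamma hx)
  simpa [slope_def_field, log_Gamma_add_one hx] using h

lemma log_le_digammaFn_add_one {x : ℝ} (hx : 0 < x) : Real.log x ≤ digammaFn (x + 1) := by
  have h := Real.convexOn_log_Gamma.slope_le_of_hasDerivAt (x := x) (y := x + 1) hx
    (by simp only [mem_Ioi]; linarith) (by linarith)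
    (hasDerivAt_log_Gamma (by linarith : 0 < x + 1))
  simpa [slope_def_field, log_Gamma_add_one hx] using h

lemma Hfun_nonpos {x : ℝ} (hx : 0 < x) : Hfun x ≤ 0 :=
  sub_nonpos.2 (digammaFn_le_log hx)

lemma neg_inv_le_Hfun {x : ℝ} (hx : 0 < x) : -x⁻¹ ≤ Hfun x := by
  have := log_le_digammaFn_add_one hx
  rw [digammaFn_add_one hx] at this
  unfold Hfun
  linarith

lemma tendsto_Hfun_atTop : Tendsto Hfun atTop (𝓝 0) := by
  refine tendsto_of_tendsto_of_tendsto_of_le_of_le'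
    (by simpa using (tendsto_inv_atTop_zero (𝕜 := ℝ)).neg) tendsto_const_nhds ?_ ?_
  · filter_upwards [eventually_gt_atTop 0] with x hx using neg_inv_le_Hfun hx
  · filter_upwards [eventually_gt_atTop 0] with x hx using Hfun_nonpos hx

lemma Hfun_add_one {x : ℝ} (hx : 0 < x) :
    Hfun (x + 1) = Hfun x + (x⁻¹ - Real.log (1 + x⁻¹)) := by
  have hlog : Real.log (1 + x⁻¹) = Real.log (x + 1) - Real.log x := by
    rw [← Real.log_div (by positivity) hx.ne', add_div, div_self hx.ne', one_div]
  rw [Hfun, Hfun, digammaFn_add_one hx, hlog]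
  ring

lemma strictMonoOn_sub_log_one_add :
    StrictMonoOn (fun u : ℝ => u - Real.log (1 + u)) (Ici 0) := by
  intro u hu v hv huv
  rw [mem_Ici] at hu hv
  have hpos : 0 < 1 + u := by linarith
  have h := Real.log_lt_sub_one_of_pos (x := (1 + v) / (1 + u)) (by positivity)
    (by rw [Ne, div_eq_one_iff_eq hpos.ne']; linarith)
  rw [Real.log_div (by linarith) hpos.ne'] at h
  have hslope : (1 + v) / (1 + u) - 1 ≤ v - u := by
    rw [div_sub_one hpos.ne', div_le_iff₀ hpos]
    nlinarith
  simp only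
  linarith

lemma tendsto_sub_log_one_add_atTop :
    Tendsto (fun u : ℝ => u - Real.log (1 + u)) atTop atTop := by
  refine tendsto_atTop_mono' _ (f₁ := fun u : ℝ => u / 2 - Real.log 2) ?_
    (tendsto_atTop_add_const_right _ _ (tendsto_id.atTop_div_const two_pos))
  filter_upwards [eventually_gt_atTop 0] with u hu
  have h := Real.log_le_sub_one_of_pos (x := (1 + u) / 2) (by linarith)
  rw [Real.log_div (by linarith) two_ne_zero] at h
  linarith

-- The gaps `H (y + N) - H (x + N)` strictly decrease to `0`.
lemma Hfun_strictMonoOn : StrictMonoOn Hfun (Ioi 0) := by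
  intro x hx y hy hxy
  rw [mem_Ioi] at hx hy
  set gap : ℕ → ℝ := fun N => Hfun (y + N) - Hfun (x + N) with hgap
  have hanti : StrictAnti gap := strictAnti_nat_of_succ_lt fun N => by
    have hxN : 0 < x + N := by positivity
    have hyN : 0 < y + N := by positivity
    have h := strictMonoOn_sub_log_one_add (inv_nonneg.2 hyN.le) (inv_nonneg.2 hxN.le)
      (inv_strictAnti₀ hxN (by linarith))
    simp only [hgap, Nat.cast_succ, ← add_assoc, Hfun_add_one hxN, Hfun_add_one hyN] at h ⊢
    linarith
  have hlim : Tendsto gap atTop (𝓝 0) := by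
    have hshift (z : ℝ) : Tendsto (fun N : ℕ => Hfun (z + N)) atTop (𝓝 0) :=
      tendsto_Hfun_atTop.comp (tendsto_atTop_add_const_left _ _ tendsto_natCast_atTop_atTop)
    simpa using (hshift y).sub (hshift x)
  have hpos : 0 < gap 0 :=
    (hanti.antitone.le_of_tendsto hlim 1).trans_lt (hanti zero_lt_one)
  simpa [hgap] using hpos

lemma Hfun_neg {x : ℝ} (hx : 0 < x) : Hfun x < 0 :=
  (Hfun_strictMonoOn hx (mem_Ioi.2 (by linarith : 0 < x + 1)) (by linarith)).trans_le
    (Hfun_nonpos (by linarith))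

lemma tendsto_Hfun_nhdsGT_zero : Tendsto Hfun (𝓝[>] 0) atBot := by
  refine tendsto_atBot_mono' _ ?_ (tendsto_neg_atTop_atBot.comp
    (tendsto_sub_log_one_add_atTop.comp tendsto_inv_nhdsGT_zero))
  filter_upwards [self_mem_nhdsWithin] with x hx
  rw [mem_Ioi] at hx
  have hstep := Hfun_add_one hx
  have hnonpos := Hfun_nonpos (x := x + 1) (by linarith)
  simp only [Function.comp]
  linarith

/-- The remainder `log Γ(x) - x log x + x` in Stirling's approximation. It is a primitive of `H`. -/
def stirlingRemainder (x : ℝ) : ℝ :=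
  Real.log (Real.Gamma x) - x * Real.log x + x

lemma Gamma_eq_exp_stirlingRemainder {x : ℝ} (hx : 0 < x) :
    Real.Gamma x = Real.exp (stirlingRemainder x + x * Real.log x - x) := by
  rw [stirlingRemainder, add_right_comm, sub_add_cancel, add_sub_cancel_right,
    Real.exp_log (Real.Gamma_pos_of_pos hx)]

lemma hasDerivAt_stirlingRemainder {x : ℝ} (hx : 0 < x) :
    HasDerivAt stirlingRemainder (Hfun x) x := by
  have h := ((hasDerivAt_log_Gamma hx).sub
    ((hasDerivAt_id x).mul (Real.hasDerivAt_log hx.ne'))).add (hasDerivAt_id x)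
  convert! h using 1
  simp only [Hfun, id]
  field_simp
  ring

lemma bijOn_Hfun : BijOn Hfun (Ioi 0) (Iio 0) := by
  refine ⟨fun x hx => Hfun_neg hx, Hfun_strictMonoOn.injOn, fun y hy => ?_⟩
  obtain ⟨a, ha, hay⟩ : ∃ a ∈ Ioi (0 : ℝ), Hfun a ≤ y :=
    (eventually_mem_nhdsWithin.and (tendsto_Hfun_nhdsGT_zero.eventually_le_atBot y)).exists
  obtain ⟨b, hb, hyb⟩ : ∃ b ∈ Ioi (0 : ℝ), y < Hfun b :=
    ((eventually_gt_atTop 0).and (tendsto_Hfun_atTop.eventually_const_lt hy)).exists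
  -- Darboux's theorem: `H` is a derivative.
  have hconn : OrdConnected (Hfun '' Ioi 0) := ordConnected_Ioi.image_hasDerivWithinAt
    fun x hx => (hasDerivAt_stirlingRemainder hx).hasDerivWithinAt
  exact hconn.out (mem_image_of_mem _ ha) (mem_image_of_mem _ hb) ⟨hay, hyb.le⟩

lemma Hinv_pos {y : ℝ} (hy : y < 0) : 0 < Hinv y :=
  bijOn_Hfun.surjOn.mapsTo_invFunOn hy

lemma Hfun_Hinv {y : ℝ} (hy : y < 0) : Hfun (Hinv y) = y :=
  bijOn_Hfun.surjOn.rightInvOn_invFunOn hy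

lemma Hinv_Hfun {x : ℝ} (hx : 0 < x) : Hinv (Hfun x) = x :=
  bijOn_Hfun.injOn.leftInvOn_invFunOn hx

lemma stirlingRemainder_antitoneOn : AntitoneOn stirlingRemainder (Ioi 0) := by
  refine antitoneOn_of_hasDerivWithinAt_nonpos (f' := Hfun) (convex_Ioi 0)
    (fun x hx => (hasDerivAt_stirlingRemainder hx).continuousAt.continuousWithinAt)
    (fun x hx => ?_) fun x hx => ?_ <;> rw [interior_Ioi] at hx
  · exact (hasDerivAt_stirlingRemainder hx).hasDerivWithinAt
  · exact Hfun_nonpos hx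

lemma stirlingRemainder_add_log_monotoneOn :
    MonotoneOn (fun x => stirlingRemainder x + Real.log x) (Ioi 0) := by
  have hderiv : ∀ x ∈ Ioi (0 : ℝ),
      HasDerivAt (fun x => stirlingRemainder x + Real.log x) (Hfun x + x⁻¹) x := fun x hx =>
    (hasDerivAt_stirlingRemainder hx).add (Real.hasDerivAt_log (ne_of_gt hx))
  refine monotoneOn_of_hasDerivWithinAt_nonneg (f' := fun x => Hfun x + x⁻¹) (convex_Ioi 0)
    (fun x hx => (hderiv x hx).continuousAt.continuousWithinAt)
    (fun x hx => ?_) fun x hx => ?_ <;> rw [interior_Ioi] at hx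
  · exact (hderiv x hx).hasDerivWithinAt
  · linarith [neg_inv_le_Hfun hx]

lemma stirlingRemainder_one : stirlingRemainder 1 = 1 := by
  simp [stirlingRemainder]

lemma tendsto_stirlingRemainder_div : Tendsto (fun x => stirlingRemainder x / x) atTop (𝓝 0) := by
  have hlower : Tendsto (fun x : ℝ => 1 / x - Real.log x / x) atTop (𝓝 0) := by
    have h := Real.isLittleO_log_id_atTop.tendsto_div_nhds_zero
    simpa using tendsto_inv_atTop_zero.sub h
  have hupper : Tendsto (fun x : ℝ => 1 / x) atTop (𝓝 0) := by
    simpa using tendsto_inv_atTop_zero (𝕜 := ℝ)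
  refine tendsto_of_tendsto_of_tendsto_of_le_of_le' hlower hupper ?_ ?_ <;>
    filter_upwards [eventually_ge_atTop 1] with x hx <;>
    have hx₀ : x ∈ Ioi (0 : ℝ) := zero_lt_one.trans_le hx
  · have h := stirlingRemainder_add_log_monotoneOn (mem_Ioi.2 one_pos) hx₀ hx
    simp only [stirlingRemainder_one, Real.log_one] at h
    rw [← sub_div]
    gcongr
    linarith
  · have h := stirlingRemainder_antitoneOn (mem_Ioi.2 one_pos) hx₀ hx
    rw [stirlingRemainder_one] at h
    gcongr

lemma tendsto_stirlingRemainder_natCast_mul_div {a : ℝ} (ha : 0 < a) :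
    Tendsto (fun n : ℕ => stirlingRemainder (n * a) / n) atTop (𝓝 0) := by
  have hna : Tendsto (fun n : ℕ => (n : ℝ) * a) atTop atTop :=
    tendsto_natCast_atTop_atTop.atTop_mul_const ha
  have h := (tendsto_stirlingRemainder_div.comp hna).mul_const a
  rw [zero_mul] at h
  refine h.congr fun n => ?_
  simp only [Function.comp]
  rw [div_mul_eq_mul_div, mul_div_mul_right _ _ ha.ne']

lemma tendsto_stirlingRemainder_natCast :
    Tendsto (fun n : ℕ => stirlingRemainder n) atTop atBot := by
  have hseq : Tendsto (fun n : ℕ => Real.log (Stirling.stirlingSeq n)) atTop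
      (𝓝 (Real.log (√Real.pi))) :=
    Stirling.tendsto_stirlingSeq_sqrt_pi.log (by positivity)
  have hlog : Tendsto (fun n : ℕ => 1 / 2 * Real.log 2 + -(1 / 2 * Real.log n)) atTop atBot :=
    tendsto_atBot_add_const_left _ _ (tendsto_neg_atTop_atBot.comp
      ((Real.tendsto_log_atTop.comp tendsto_natCast_atTop_atTop).const_mul_atTop (by norm_num)))
  refine (hseq.add_atBot hlog).congr' ?_
  filter_upwards [eventually_gt_atTop 0] with n hn
  have hn' : (0 : ℝ) < n := by exact_mod_cast hn
  have hfact : Real.log (n.factorial : ℝ) = Real.log n + Real.log (Real.Gamma n) := by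
    rw [← log_Gamma_add_one hn', Real.Gamma_nat_eq_factorial]
  rw [Stirling.log_stirlingSeq_formula, hfact, Real.log_mul two_ne_zero hn'.ne',
    Real.log_div hn'.ne' (Real.exp_ne_zero _), Real.log_exp, stirlingRemainder]
  ring

end StirlingRemainder

section ExponentialGrowth

open ExpGrowth

lemma ofReal_exp_natCast_mul (n : ℕ) (a : ℝ) :
    ENNReal.ofReal (Real.exp (n * a)) = EReal.exp (a * n) := by
  rw [← EReal.exp_coe, EReal.coe_mul, EReal.coe_natCast, mul_comm]

lemma expGrowthSup_ofReal_exp (a : ℝ) :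
    expGrowthSup (fun n : ℕ => ENNReal.ofReal (Real.exp (n * a))) = a := by
  simp only [ofReal_exp_natCast_mul, expGrowthSup_exp]

lemma expGrowthInf_add_le (u v : ℕ → ℝ≥0∞) :
    expGrowthInf (u + v) ≤ expGrowthInf u ⊔ expGrowthSup v := by
  have hsup : expGrowthInf (u ⊔ v) ≤ expGrowthInf u ⊔ expGrowthSup v :=
    expGrowthInf_le_iff.2 fun b hb =>
      ((frequently_le_exp (le_sup_left.trans_lt hb)).and_eventually
        (eventually_le_exp (le_sup_right.trans_lt hb))).mono fun _ h => max_le h.1 h.2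
  refine (expGrowthInf_le_of_eventually_le (b := 2) ENNReal.ofNat_ne_top
    (.of_forall fun n => ?_)).trans hsup
  exact (add_le_add le_sup_left le_sup_right).trans_eq (two_mul ((u ⊔ v) n)).symm

lemma expGrowthInf_ofReal_exp_mul_le (a : ℝ) (u : ℕ → ℝ≥0∞) :
    expGrowthInf (fun n => ENNReal.ofReal (Real.exp (n * a)) * u n) ≤ a + expGrowthInf u := by
  have h := expGrowthInf_mul_le (u := fun n => ENNReal.ofReal (Real.exp (n * a))) (v := u)
    (.inl (by simp [expGrowthSup_ofReal_exp])) (.inl (by simp [expGrowthSup_ofReal_exp]))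
  rwa [expGrowthSup_ofReal_exp] at h

lemma expGrowthSup_ofReal_exp_mul_le (a : ℝ) (u : ℕ → ℝ≥0∞) :
    expGrowthSup (fun n => ENNReal.ofReal (Real.exp (n * a)) * u n) ≤ a + expGrowthSup u := by
  have h := expGrowthSup_mul_le (u := fun n => ENNReal.ofReal (Real.exp (n * a))) (v := u)
    (.inl (by simp [expGrowthSup_ofReal_exp])) (.inl (by simp [expGrowthSup_ofReal_exp]))
  rwa [expGrowthSup_ofReal_exp] at h

lemma inv_natCast_mul_log_eq_div (n : ℕ) (x : ℝ≥0∞) :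
    (((n : ℝ)⁻¹ : ℝ) : EReal) * ENNReal.log x = ENNReal.log x / (n : EReal) := by
  rw [EReal.coe_inv, EReal.coe_natCast, EReal.div_eq_inv_mul]

lemma expGrowthSup_le_neg_iInf_of_isClosed {κ : ℕ → Measure ℝ} {J : ℝ → EReal} {m : ℝ}
    (hIic : ∀ a ≤ m, expGrowthSup (fun n => κ n (Iic a)) ≤ -J a)
    (hIci : ∀ b ≥ m, expGrowthSup (fun n => κ n (Ici b)) ≤ -J b)
    {A : Set ℝ} (hA : IsClosed A) :
    expGrowthSup (fun n => κ n A) ≤ -⨅ θ ∈ A, J θ := by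
  have hpart : ∀ S : Set ℝ, (S.Nonempty → ∃ θ ∈ A, ∃ T, S ⊆ T ∧
      expGrowthSup (fun n => κ n T) ≤ -J θ) →
      expGrowthSup (fun n => κ n S) ≤ -⨅ θ ∈ A, J θ := by
    intro S hS
    rcases S.eq_empty_or_nonempty with rfl | hne
    · simp only [measure_empty]
      exact expGrowthSup_zero.trans_le bot_le
    · obtain ⟨θ, hθ, T, hST, hT⟩ := hS hne
      exact (expGrowthSup_monotone fun n => measure_mono hST).trans
        (hT.trans (EReal.neg_le_neg_iff.2 (iInf₂_le θ hθ)))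
  have hleft : expGrowthSup (fun n => κ n (A ∩ Iic m)) ≤ -⨅ θ ∈ A, J θ := hpart _ fun hne => by
    have hbdd : BddAbove (A ∩ Iic m) := ⟨m, fun _ hx => hx.2⟩
    obtain ⟨haA, ham⟩ := (hA.inter isClosed_Iic).csSup_mem hne hbdd
    exact ⟨_, haA, Iic _, fun _ hx => le_csSup hbdd hx, hIic _ ham⟩
  have hright : expGrowthSup (fun n => κ n (A ∩ Ici m)) ≤ -⨅ θ ∈ A, J θ := hpart _ fun hne => by
    have hbdd : BddBelow (A ∩ Ici m) := ⟨m, fun _ hx => hx.2⟩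
    obtain ⟨hbA, hbm⟩ := (hA.inter isClosed_Ici).csInf_mem hne hbdd
    exact ⟨_, hbA, Ici _, fun _ hx => csInf_le hbdd hx, hIci _ hbm⟩
  refine le_trans (expGrowthSup_monotone fun n => ?_) (expGrowthSup_add.trans_le
    (max_le hleft hright))
  refine (measure_mono ?_).trans (measure_union_le (A ∩ Iic m) (A ∩ Ici m))
  rw [← inter_union_distrib_left, Iic_union_Ici, inter_univ]

lemma setLIntegral_exp_le_of_le_mul {Ω : Type*} [MeasurableSpace Ω] {μ : Measure Ω} {X : Ω → ℝ}
    (hX : AEMeasurable X μ) {t η a : ℝ} {S : Set Ω} (hS : ∀ ω ∈ S, a ≤ η * X ω) :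
    ∫⁻ ω in S, ENNReal.ofReal (Real.exp (t * X ω)) ∂μ ≤
      ENNReal.ofReal (Real.exp (-a)) *
        ∫⁻ ω, ENNReal.ofReal (Real.exp ((t + η) * X ω)) ∂μ := by
  rw [← lintegral_const_mul' _ _ ENNReal.ofReal_ne_top]
  refine le_trans (setLIntegral_mono_ae ?_ (.of_forall fun ω hω => ?_))
    (setLIntegral_le_lintegral S _)
  · exact ((hX.restrict.const_mul _).exp.ennreal_ofReal).const_mul _
  · rw [← ENNReal.ofReal_mul (Real.exp_nonneg _), ← Real.exp_add]
    refine ENNReal.ofReal_le_ofReal (Real.exp_le_exp.2 ?_)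
    linarith [hS ω hω]

lemma eventually_apply_add_mul_sub_lt {Λ : ℝ → ℝ} {t s : ℝ} (hΛ : HasDerivAt Λ s t) (σ : ℝ)
    {δ : ℝ} (hδ : 0 < δ) : ∀ᶠ ε in 𝓝[>] 0, Λ (t + ε * σ) - ε * (σ * s + δ) < Λ t := by
  have hline : HasDerivAt (fun ε => t + ε * σ) σ 0 := by
    simpa using ((hasDerivAt_id (0 : ℝ)).mul_const σ).const_add t
  have hslope := (hΛ.comp_of_eq 0 hline (by simp)).tendsto_slope_zero_right.eventually_lt_const
    (show s * σ < σ * s + δ by linarith)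
  filter_upwards [hslope, self_mem_nhdsWithin] with ε hε hpos
  rw [mem_Ioi] at hpos
  simp only [Function.comp_apply, zero_add, zero_mul, add_zero, smul_eq_mul] at hε
  rw [inv_mul_lt_iff₀ hpos] at hε
  linarith

variable {Ω : ℕ → Type*} [∀ n, MeasurableSpace (Ω n)] {μ : ∀ n, Measure (Ω n)}
  {X : ∀ n, Ω n → ℝ}

/-- The random variables `X n` have scaled cumulant generating function `l` at `t`: the quantity
`n⁻¹ log E[exp (n t X n)]` tends to `l`. The expectation is a Lebesgue integral, so that its
finiteness for large `n` is part of the statement. -/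
def HasScaledCGFAt (μ : ∀ n, Measure (Ω n)) (X : ∀ n, Ω n → ℝ) (t l : ℝ) : Prop :=
  Tendsto (fun n : ℕ => ENNReal.log (∫⁻ ω, ENNReal.ofReal (Real.exp (n * t * X n ω)) ∂(μ n)) / n)
    atTop (𝓝 (l : EReal))

namespace HasScaledCGFAt

lemma expGrowthSup_setLIntegral_le (hX : ∀ n, AEMeasurable (X n) (μ n)) {t η l a : ℝ}
    (h : HasScaledCGFAt μ X (t + η) l) {S : ∀ n, Set (Ω n)} (hS : ∀ n, ∀ ω ∈ S n, a ≤ η * X n ω) :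
    expGrowthSup (fun n => ∫⁻ ω in S n, ENNReal.ofReal (Real.exp (n * t * X n ω)) ∂(μ n)) ≤
      ((l - a : ℝ) : EReal) := by
  refine (expGrowthSup_monotone fun n => setLIntegral_exp_le_of_le_mul (hX n) (η := n * η)
    (a := n * a) fun ω hω => ?_).trans ?_
  · rw [mul_assoc]
    exact mul_le_mul_of_nonneg_left (hS n ω hω) n.cast_nonneg
  · simp only [← mul_neg, ← mul_add]
    refine (expGrowthSup_ofReal_exp_mul_le _ _).trans_eq ?_
    rw [expGrowthSup, h.limsup_eq, ← EReal.coe_add, neg_add_eq_sub]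

lemma chernoff_expGrowthSup_le (hX : ∀ n, AEMeasurable (X n) (μ n)) {t l a : ℝ}
    (h : HasScaledCGFAt μ X t l) {S : ∀ n, Set (Ω n)} (hS : ∀ n, ∀ ω ∈ S n, a ≤ t * X n ω) :
    expGrowthSup (fun n => μ n (S n)) ≤ ((l - a : ℝ) : EReal) := by
  rw [← zero_add t] at h
  simpa using h.expGrowthSup_setLIntegral_le hX hS

-- Tilting by `t` moves the mass near `s = Λ' t`: the tilted tails are exponentially negligible.
lemma expGrowthSup_tail_lt (hX : ∀ n, AEMeasurable (X n) (μ n)) {Λ : ℝ → ℝ} {t s : ℝ}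
    (h : ∀ᶠ u in 𝓝 t, HasScaledCGFAt μ X u (Λ u)) (hΛ : HasDerivAt Λ s t) (σ : ℝ) {δ : ℝ}
    (hδ : 0 < δ) :
    expGrowthSup (fun n => ∫⁻ ω in {ω | σ * s + δ ≤ σ * X n ω},
      ENNReal.ofReal (Real.exp (n * t * X n ω)) ∂(μ n)) < Λ t := by
  have hline : Tendsto (fun ε => t + ε * σ) (𝓝[>] 0) (𝓝 t) :=
    tendsto_nhdsWithin_of_tendsto_nhds (Continuous.tendsto' (by fun_prop) _ _ (by simp))
  obtain ⟨ε, hlt, hcgf, hε⟩ := ((eventually_apply_add_mul_sub_lt hΛ σ hδ).and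
    ((hline.eventually h).and eventually_mem_nhdsWithin)).exists
  rw [mem_Ioi] at hε
  refine (hcgf.expGrowthSup_setLIntegral_le (a := ε * (σ * s + δ)) hX fun n ω hω => ?_).trans_lt
    (EReal.coe_lt_coe_iff.2 hlt)
  rw [mul_assoc]
  exact mul_le_mul_of_nonneg_left hω hε.le

lemma le_expGrowthInf_setLIntegral (hX : ∀ n, AEMeasurable (X n) (μ n)) {Λ : ℝ → ℝ} {t s δ : ℝ}
    (h : ∀ᶠ u in 𝓝 t, HasScaledCGFAt μ X u (Λ u)) (hΛ : HasDerivAt Λ s t) (hδ : 0 < δ) :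
    Λ t ≤ expGrowthInf (fun n => ∫⁻ ω in {ω | |X n ω - s| < δ},
      ENNReal.ofReal (Real.exp (n * t * X n ω)) ∂(μ n)) := by
  set part : (∀ n, Set (Ω n)) → ℕ → ℝ≥0∞ := fun S n =>
    ∫⁻ ω in S n, ENNReal.ofReal (Real.exp (n * t * X n ω)) ∂(μ n)
  set tail : ℝ → ∀ n, Set (Ω n) := fun σ n => {ω | σ * s + δ ≤ σ * X n ω} with htail
  set middle : ∀ n, Set (Ω n) := fun n => {ω | |X n ω - s| < δ} with hmiddle
  have hcover (n : ℕ) : (univ : Set (Ω n)) ⊆ middle n ∪ (tail 1 n ∪ tail (-1) n) := by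
    intro ω _
    by_contra! hω
    simp only [htail, hmiddle, mem_union, mem_ofPred_eq, not_or, not_le, not_lt, le_abs] at hω
    rcases hω with ⟨h₁ | h₁, h₂, h₃⟩ <;> linarith
  have htails : expGrowthSup (part (tail 1) + part (tail (-1))) < Λ t := by
    rw [expGrowthSup_add]
    exact max_lt (expGrowthSup_tail_lt hX h hΛ 1 hδ) (expGrowthSup_tail_lt hX h hΛ (-1) hδ)
  have htotal : (Λ t : EReal) ≤
      expGrowthInf (part middle + (part (tail 1) + part (tail (-1)))) := by
    rw [← h.self_of_nhds.liminf_eq]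
    refine expGrowthInf_monotone fun n => ?_
    rw [← setLIntegral_univ]
    exact (lintegral_mono_set (hcover n)).trans ((lintegral_union_le _ _ _).trans
      (add_le_add_right (lintegral_union_le _ _ _) _))
  exact (le_max_iff.1 (htotal.trans (expGrowthInf_add_le _ _))).resolve_right htails.not_ge

lemma sub_le_expGrowthInf_measure_abs_sub_lt (hX : ∀ n, AEMeasurable (X n) (μ n)) {Λ : ℝ → ℝ}
    {t s δ : ℝ} (h : ∀ᶠ u in 𝓝 t, HasScaledCGFAt μ X u (Λ u)) (hΛ : HasDerivAt Λ s t)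
    (hδ : 0 < δ) :
    ((Λ t - (t * s + |t| * δ) : ℝ) : EReal) ≤
      expGrowthInf (fun n => μ n {ω | |X n ω - s| < δ}) := by
  rw [EReal.coe_sub]
  refine EReal.sub_le_of_le_add' ((le_expGrowthInf_setLIntegral hX h hΛ hδ).trans
    (le_trans (expGrowthInf_monotone fun n => ?_) (expGrowthInf_ofReal_exp_mul_le _ _)))
  rw [← setLIntegral_const]
  refine setLIntegral_mono measurable_const fun ω hω => ?_
  have hdev : t * (X n ω - s) ≤ |t| * δ :=
    (le_abs_self _).trans ((abs_mul _ _).trans_le (by gcongr; exact le_of_lt hω))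
  rw [mul_assoc]
  refine ENNReal.ofReal_le_ofReal (Real.exp_le_exp.2 ?_)
  gcongr
  linarith

lemma gartnerEllis_le_expGrowthInf (hX : ∀ n, AEMeasurable (X n) (μ n)) {Λ : ℝ → ℝ}
    {t s : ℝ} (h : ∀ᶠ u in 𝓝 t, HasScaledCGFAt μ X u (Λ u)) (hΛ : HasDerivAt Λ s t)
    {U : Set ℝ} (hU : U ∈ 𝓝 s) :
    ((Λ t - t * s : ℝ) : EReal) ≤ expGrowthInf (fun n => μ n (X n ⁻¹' U)) := by
  have hlim : Tendsto (fun δ : ℝ => ((Λ t - (t * s + |t| * δ) : ℝ) : EReal)) (𝓝[>] 0)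
      (𝓝 ((Λ t - t * s : ℝ) : EReal)) := by
    have hcont : Continuous fun δ : ℝ => Λ t - (t * s + |t| * δ) := by fun_prop
    exact EReal.tendsto_coe.2 (tendsto_nhdsWithin_of_tendsto_nhds (by simpa using hcont.tendsto 0))
  obtain ⟨ε, hε, hball⟩ := Metric.mem_nhds_iff.1 hU
  refine le_of_tendsto hlim ?_
  filter_upwards [Ioo_mem_nhdsGT hε] with δ hδ
  exact (sub_le_expGrowthInf_measure_abs_sub_lt hX h hΛ hδ.1).trans
    (expGrowthInf_monotone fun n => measure_mono fun ω hω => hball (lt_trans hω hδ.2))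

end HasScaledCGFAt

end ExponentialGrowth

section Polar

variable {E : Type*} [NormedAddCommGroup E] [NormedSpace ℝ E] [FiniteDimensional ℝ E]
  [Nontrivial E] [MeasurableSpace E] [BorelSpace E]

local notation "dim" => Module.finrank ℝ

lemma lintegral_eq_lintegral_toSphere (μ : Measure E) [μ.IsAddHaarMeasure] {f : E → ℝ≥0∞}
    (hf : Measurable f) :
    ∫⁻ x, f x ∂μ =
      ∫⁻ u, (∫⁻ r in Ioi (0 : ℝ), ENNReal.ofReal (r ^ (dim E - 1)) * f (r • u.1)) ∂μ.toSphere :=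
  calc
    ∫⁻ x, f x ∂μ = ∫⁻ x : ({(0)}ᶜ : Set E), f x.1 ∂(μ.comap Subtype.val) := by
      rw [lintegral_subtype_comap (measurableSet_singleton _).compl, restrict_compl_singleton]
    _ = ∫⁻ z, f (z.2.1 • z.1.1) ∂(μ.toSphere.prod (.volumeIoiPow (dim E - 1))) := by
      rw [← μ.measurePreserving_homeomorphUnitSphereProd.lintegral_comp
        (f := fun z => f (z.2.1 • z.1.1)) (by fun_prop)]
      refine lintegral_congr fun x => ?_
      rw [← homeomorphUnitSphereProd_symm_apply_coe, Homeomorph.symm_apply_apply]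
    _ = _ := by
      rw [lintegral_prod _ (by fun_prop)]
      refine lintegral_congr fun u => ?_
      rw [Measure.volumeIoiPow, lintegral_withDensity_eq_lintegral_mul _ (by fun_prop)
        (by fun_prop)]
      exact lintegral_subtype_comap measurableSet_Ioi
        fun r => ENNReal.ofReal (r ^ (dim E - 1)) * f (r • u.1)

lemma lintegral_Ioi_comp_mul_right (f : ℝ → ℝ≥0∞) {s : ℝ} (hs : 0 < s) :
    ∫⁻ r in Ioi 0, f (r * s) = ENNReal.ofReal s⁻¹ * ∫⁻ r in Ioi 0, f r := by
  have himage : (fun r => r * s⁻¹) '' Ioi 0 = Ioi 0 := by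
    simpa using (OrderIso.mulRight₀ s⁻¹ (inv_pos.2 hs)).image_Ioi 0
  calc ∫⁻ r in Ioi 0, f (r * s) = ∫⁻ r in (fun r => r * s⁻¹) '' Ioi 0, f (r * s) := by rw [himage]
    _ = ∫⁻ r in Ioi 0, ENNReal.ofReal |s⁻¹| * f (r * s⁻¹ * s) :=
      lintegral_image_eq_lintegral_abs_deriv_mul measurableSet_Ioi
        (fun r _ => (hasDerivAt_mul_const s⁻¹).hasDerivWithinAt)
        (mul_left_injective₀ (inv_ne_zero hs.ne')).injOn _
    _ = ENNReal.ofReal s⁻¹ * ∫⁻ r in Ioi 0, f r := by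
      simp only [inv_mul_cancel_right₀ hs.ne', abs_of_pos (inv_pos.2 hs)]
      exact lintegral_const_mul' _ _ ENNReal.ofReal_ne_top

lemma lintegral_Ioi_pow_mul_comp_mul_right (g : ℝ → ℝ≥0∞) (k : ℕ) {s : ℝ} (hs : 0 < s) :
    ∫⁻ r in Ioi 0, ENNReal.ofReal (r ^ k) * g (r * s) =
      ENNReal.ofReal (s ^ (k + 1))⁻¹ * ∫⁻ r in Ioi 0, ENNReal.ofReal (r ^ k) * g r := by
  have hpow (r : ℝ) : ENNReal.ofReal (r ^ k) * g (r * s) =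
      ENNReal.ofReal (s ^ k)⁻¹ * (ENNReal.ofReal ((r * s) ^ k) * g (r * s)) := by
    rw [← mul_assoc, ← ENNReal.ofReal_mul (by positivity), mul_pow, mul_comm (r ^ k),
      inv_mul_cancel_left₀ (by positivity)]
  simp_rw [hpow]
  rw [lintegral_const_mul' _ _ ENNReal.ofReal_ne_top,
    lintegral_Ioi_comp_mul_right (fun r => ENNReal.ofReal (r ^ k) * g r) hs, ← mul_assoc,
    ← ENNReal.ofReal_mul (by positivity), pow_succ, mul_inv]

variable {N : E → ℝ} {h : E → ℝ≥0∞} {g : ℝ → ℝ≥0∞}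

lemma lintegral_mul_comp_eq_mul_lintegral_toSphere (μ : Measure E) [μ.IsAddHaarMeasure]
    (hN : Measurable N) (hNpos : ∀ x ≠ 0, 0 < N x) (hNsmul : ∀ r > 0, ∀ x, N (r • x) = r * N x)
    (hh : Measurable h) (hhsmul : ∀ r > (0 : ℝ), ∀ x, h (r • x) = h x) (hg : Measurable g) :
    ∫⁻ x, h x * g (N x) ∂μ =
      (∫⁻ r in Ioi 0, ENNReal.ofReal (r ^ (dim E - 1)) * g r) *
        ∫⁻ u, h u.1 * ENNReal.ofReal (N u.1 ^ dim E)⁻¹ ∂μ.toSphere := by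
  rw [lintegral_eq_lintegral_toSphere μ (f := fun x => h x * g (N x)) (by fun_prop),
    ← lintegral_const_mul _ (by fun_prop)]
  refine lintegral_congr fun u => ?_
  have hray : ∀ r ∈ Ioi (0 : ℝ), ENNReal.ofReal (r ^ (dim E - 1)) *
      (h (r • u.1) * g (N (r • u.1))) =
        h u.1 * (ENNReal.ofReal (r ^ (dim E - 1)) * g (r * N u.1)) := fun r hr => by
    rw [hhsmul r hr, hNsmul r hr, mul_left_comm]
  have hNu : 0 < N u.1 := hNpos _ (ne_zero_of_mem_unit_sphere u)
  rw [setLIntegral_congr_fun measurableSet_Ioi hray, lintegral_const_mul _ (by fun_prop),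
    lintegral_Ioi_pow_mul_comp_mul_right g _ hNu, Nat.sub_add_cancel Module.finrank_pos]
  ring

lemma lintegral_Ioi_pow_mul_indicator_Iic_one (k : ℕ) :
    ∫⁻ r in Ioi (0 : ℝ), ENNReal.ofReal (r ^ k) * (Iic 1).indicator 1 r =
      ENNReal.ofReal ((k + 1 : ℝ)⁻¹) := by
  calc ∫⁻ r in Ioi (0 : ℝ), ENNReal.ofReal (r ^ k) * (Iic 1).indicator 1 r
      = ∫⁻ r in Ioi (0 : ℝ), (Iic 1).indicator (fun r => ENNReal.ofReal (r ^ k)) r :=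
        lintegral_congr fun r => by
          by_cases hr : r ≤ 1 <;> simp [hr]
    _ = ∫⁻ r in Ioc (0 : ℝ) 1, ENNReal.ofReal (r ^ k) := by
        rw [lintegral_indicator measurableSet_Iic, Measure.restrict_restrict measurableSet_Iic,
          Iic_inter_Ioi]
    _ = ENNReal.ofReal (∫ r in (0 : ℝ)..1, r ^ k) := by
        rw [intervalIntegral.integral_of_le zero_le_one, ofReal_integral_eq_lintegral_ofReal
          (intervalIntegral.intervalIntegrable_pow k).1]
        filter_upwards [ae_restrict_mem measurableSet_Ioc] with r hr
        exact pow_nonneg hr.1.le k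
    _ = ENNReal.ofReal ((k + 1 : ℝ)⁻¹) := by
        rw [integral_pow, one_pow, zero_pow k.succ_ne_zero, sub_zero, one_div]

lemma lintegral_mul_comp_eq_mul_setLIntegral (μ : Measure E) [μ.IsAddHaarMeasure]
    (hN : Measurable N) (hNpos : ∀ x ≠ 0, 0 < N x) (hNsmul : ∀ r > 0, ∀ x, N (r • x) = r * N x)
    (hh : Measurable h) (hhsmul : ∀ r > (0 : ℝ), ∀ x, h (r • x) = h x) (hg : Measurable g) :
    ∫⁻ x, h x * g (N x) ∂μ =
      (dim E * ∫⁻ r in Ioi 0, ENNReal.ofReal (r ^ (dim E - 1)) * g r) *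
        ∫⁻ x in {x | N x ≤ 1}, h x ∂μ := by
  have hdim : ((dim E - 1 : ℕ) + 1 : ℝ) = dim E := by
    exact_mod_cast Nat.sub_add_cancel (Module.finrank_pos (R := ℝ) (M := E))
  have hball : ∫⁻ x in {x | N x ≤ 1}, h x ∂μ = ∫⁻ x, h x * (Iic 1).indicator 1 (N x) ∂μ := by
    rw [← lintegral_indicator (measurableSet_le hN measurable_const)]
    refine lintegral_congr fun x => ?_
    by_cases hx : N x ≤ 1 <;> simp [hx]
  have hdim0 : 0 < (dim E : ℝ) := Nat.cast_pos.2 Module.finrank_pos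
  rw [hball, lintegral_mul_comp_eq_mul_lintegral_toSphere μ hN hNpos hNsmul hh hhsmul hg,
    lintegral_mul_comp_eq_mul_lintegral_toSphere μ hN hNpos hNsmul hh hhsmul
      (measurable_one.indicator measurableSet_Iic),
    lintegral_Ioi_pow_mul_indicator_Iic_one, hdim, ENNReal.ofReal_inv_of_pos hdim0,
    ENNReal.ofReal_natCast, mul_mul_mul_comm, ENNReal.mul_inv_cancel
    (by exact_mod_cast hdim0.ne') (ENNReal.natCast_ne_top _), one_mul]

lemma lintegral_Ioi_rpow_mul_exp_neg_rpow {p q : ℝ} (hp : 0 < p) (hq : -1 < q) :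
    ∫⁻ r in Ioi (0 : ℝ), ENNReal.ofReal (r ^ q * Real.exp (-r ^ p)) =
      ENNReal.ofReal (1 / p * Real.Gamma ((q + 1) / p)) := by
  rw [← integral_rpow_mul_exp_neg_rpow hp hq, ofReal_integral_eq_lintegral_ofReal
    (integrableOn_rpow_mul_exp_neg_rpow hq hp)]
  filter_upwards [ae_restrict_mem measurableSet_Ioi] with r hr
  have hr0 : 0 < r := hr
  positivity

end Polar

section LpBall

variable {n : ℕ} {p t : ℝ} {x : Fin n → ℝ}

lemma pNorm_smul (hp : p ≠ 0) {r : ℝ} (hr : 0 ≤ r) (x : Fin n → ℝ) :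
    pNorm p (r • x) = r * pNorm p x := by
  simp only [pNorm, Pi.smul_apply, smul_eq_mul, abs_mul, abs_of_nonneg hr,
    Real.mul_rpow hr (abs_nonneg _), ← Finset.mul_sum]
  rw [Real.mul_rpow (by positivity) (by positivity), ← Real.rpow_mul hr, mul_one_div_cancel hp,
    Real.rpow_one]

lemma pNorm_pos (hx : x ≠ 0) : 0 < pNorm p x := by
  obtain ⟨i, hi⟩ := Function.ne_iff.1 hx
  exact Real.rpow_pos_of_pos (Finset.sum_pos' (fun j _ => by positivity)
    ⟨i, Finset.mem_univ i, Real.rpow_pos_of_pos (abs_pos.2 hi) p⟩) _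

lemma pNorm_rpow (hp : p ≠ 0) (x : Fin n → ℝ) : pNorm p x ^ p = ∑ i, |x i| ^ p := by
  rw [pNorm, ← Real.rpow_mul (by positivity), one_div_mul_cancel hp, Real.rpow_one]

lemma measurable_pNorm : Measurable (pNorm p : (Fin n → ℝ) → ℝ) := by
  unfold pNorm
  fun_prop

lemma measurableSet_unitBallp : MeasurableSet (unitBallp n p) :=
  measurable_pNorm measurableSet_Iic

lemma measurableSet_unitSpherep : MeasurableSet (unitSpherep n p) :=
  measurable_pNorm (measurableSet_singleton 1)

lemma measurable_ratioAGM : Measurable (ratioAGM p : (Fin n → ℝ) → ℝ) := by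
  unfold ratioAGM
  fun_prop

lemma ratioAGM_eq_div_pNorm (p : ℝ) (x : Fin n → ℝ) :
    ratioAGM p x = (n : ℝ) ^ (1 / p) * (∏ i, |x i|) ^ ((1 : ℝ) / n) / pNorm p x := by
  rw [ratioAGM, Real.mul_rpow (by positivity) (by positivity), one_div (n : ℝ),
    Real.inv_rpow n.cast_nonneg, ← div_div, div_inv_eq_mul, mul_comm, pNorm]

lemma ratioAGM_smul (hp : p ≠ 0) (hn : n ≠ 0) {r : ℝ} (hr : 0 < r) (x : Fin n → ℝ) :
    ratioAGM p (r • x) = ratioAGM p x := by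
  have hprod : (∏ i, |(r • x) i|) ^ ((1 : ℝ) / n) = r * (∏ i, |x i|) ^ ((1 : ℝ) / n) := by
    simp only [Pi.smul_apply, smul_eq_mul, abs_mul, abs_of_pos hr, Finset.prod_mul_distrib,
      Finset.prod_const, Finset.card_univ, Fintype.card_fin]
    rw [Real.mul_rpow (by positivity) (by positivity), one_div, Real.pow_rpow_inv_natCast hr.le hn]
  rw [ratioAGM_eq_div_pNorm, ratioAGM_eq_div_pNorm, hprod, pNorm_smul hp hr.le, mul_left_comm,
    mul_div_mul_left _ _ hr.ne']

lemma ratioAGM_pos (hn : n ≠ 0) (hx : ∀ i, x i ≠ 0) : 0 < ratioAGM p x := by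
  have hx0 : x ≠ 0 := fun h => hx ⟨0, hn.pos⟩ (congrFun h _)
  have hprod : 0 < ∏ i, |x i| := Finset.prod_pos fun i _ => abs_pos.2 (hx i)
  have hnorm : 0 < pNorm p x := pNorm_pos hx0
  rw [ratioAGM_eq_div_pNorm]
  positivity

lemma ratioAGM_rpow_mul_pNorm_rpow (hn : n ≠ 0) (hx : ∀ i, x i ≠ 0) (p t : ℝ) :
    ratioAGM p x ^ (n * t) * pNorm p x ^ (n * t) = (n : ℝ) ^ (n * t / p) * ∏ i, |x i| ^ t := by
  have hnorm : 0 < pNorm p x := pNorm_pos fun h => hx ⟨0, hn.pos⟩ (congrFun h _)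
  rw [← Real.mul_rpow (ratioAGM_pos hn hx).le hnorm.le, ratioAGM_eq_div_pNorm,
    div_mul_cancel₀ _ hnorm.ne', Real.mul_rpow (by positivity) (by positivity),
    ← Real.rpow_mul n.cast_nonneg, one_div_mul_eq_div, ← Real.rpow_mul (by positivity),
    one_div, inv_mul_cancel_left₀ (Nat.cast_ne_zero.2 hn),
    Real.finsetProd_rpow _ _ fun i _ => abs_nonneg (x i)]

lemma exp_log_ratioAGM_mul_pNorm_rpow_mul_exp (hp : p ≠ 0) (hn : n ≠ 0) (hx : ∀ i, x i ≠ 0)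
    (t : ℝ) :
    Real.exp (n * t * Real.log (ratioAGM p x)) *
        (pNorm p x ^ (n * t) * Real.exp (-pNorm p x ^ p)) =
      (n : ℝ) ^ (n * t / p) * ∏ i, (|x i| ^ t * Real.exp (-|x i| ^ p)) := by
  rw [mul_comm (n * t), ← Real.rpow_def_of_pos (ratioAGM_pos hn hx), ← mul_assoc,
    ratioAGM_rpow_mul_pNorm_rpow hn hx, pNorm_rpow hp, ← Finset.sum_neg_distrib, Real.exp_sum,
    Finset.prod_mul_distrib, mul_assoc]

lemma ae_forall_apply_ne_zero {ι : Type*} [Fintype ι] : ∀ᵐ x : ι → ℝ, ∀ i, x i ≠ 0 :=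
  ae_all_iff.2 fun i =>
    (Measure.quasiMeasurePreserving_eval (fun _ : ι => (volume : Measure ℝ)) i).ae
      (Measure.ae_ne volume (0 : ℝ))

lemma integral_abs_rpow_mul_exp_neg_abs_rpow (hp : 0 < p) (ht : -1 < t) :
    ∫ x : ℝ, |x| ^ t * Real.exp (-|x| ^ p) = 2 / p * Real.Gamma ((1 + t) / p) := by
  rw [integral_comp_abs (f := fun x => x ^ t * Real.exp (-x ^ p)),
    integral_rpow_mul_exp_neg_rpow hp ht, add_comm t]
  ring

lemma lintegral_prod_abs_rpow_mul_exp_neg_abs_rpow {ι : Type*} [Fintype ι] (hp : 0 < p)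
    (ht : -1 < t) :
    ∫⁻ x : ι → ℝ, ENNReal.ofReal (∏ i, (|x i| ^ t * Real.exp (-|x i| ^ p))) =
      ENNReal.ofReal ((2 / p * Real.Gamma ((1 + t) / p)) ^ Fintype.card ι) := by
  have hGamma : 0 < Real.Gamma ((1 + t) / p) :=
    Real.Gamma_pos_of_pos (div_pos (by linarith) hp)
  have hint : ∫ x : ι → ℝ, ∏ i, (|x i| ^ t * Real.exp (-|x i| ^ p)) =
      (2 / p * Real.Gamma ((1 + t) / p)) ^ Fintype.card ι := by
    rw [integral_fintype_prod_volume_eq_pow (fun x : ℝ => |x| ^ t * Real.exp (-|x| ^ p)),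
      integral_abs_rpow_mul_exp_neg_abs_rpow hp ht]
  rw [← hint, ofReal_integral_eq_lintegral_ofReal]
  · refine Integrable.of_integral_ne_zero ?_
    rw [hint]
    positivity
  · exact .of_forall fun x => Finset.prod_nonneg fun i _ => by positivity

lemma lintegral_mul_pNorm_rpow_mul_exp_neg (hp : 0 < p) (hn : n ≠ 0) {b : ℝ} (hb : 0 < n + b)
    {h : (Fin n → ℝ) → ℝ≥0∞} (hh : Measurable h)
    (hhsmul : ∀ r > (0 : ℝ), ∀ x, h (r • x) = h x) :
    ∫⁻ x, h x * ENNReal.ofReal (pNorm p x ^ b * Real.exp (-pNorm p x ^ p)) =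
      ENNReal.ofReal (n / p * Real.Gamma ((n + b) / p)) * ∫⁻ x in unitBallp n p, h x := by
  have : NeZero n := ⟨hn⟩
  have hradial : ∫⁻ r in Ioi (0 : ℝ), ENNReal.ofReal (r ^ (n - 1)) *
      ENNReal.ofReal (r ^ b * Real.exp (-r ^ p)) =
        ENNReal.ofReal (1 / p * Real.Gamma ((n + b) / p)) := by
    rw [show n + b = (n - 1 + b) + 1 by ring,
      ← lintegral_Ioi_rpow_mul_exp_neg_rpow hp (by linarith)]
    refine setLIntegral_congr_fun measurableSet_Ioi fun r hr => ?_
    rw [mem_Ioi] at hr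
    rw [← ENNReal.ofReal_mul (by positivity), ← mul_assoc, Real.rpow_add hr,
      ← Nat.cast_pred hn.pos, Real.rpow_natCast]
  have hpolar := lintegral_mul_comp_eq_mul_setLIntegral volume measurable_pNorm
    (fun x hx => pNorm_pos (p := p) hx) (fun r hr => pNorm_smul hp.ne' hr.le) hh hhsmul
    (g := fun r => ENNReal.ofReal (r ^ b * Real.exp (-r ^ p))) (by fun_prop)
  rw [hpolar, Module.finrank_fin_fun, hradial, ← ENNReal.ofReal_natCast,
    ← ENNReal.ofReal_mul n.cast_nonneg, ← mul_assoc, mul_one_div]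
  rfl

lemma lintegral_exp_log_ratioAGM_mul_pNorm_rpow_mul_exp (hp : 0 < p) (ht : -1 < t) (hn : n ≠ 0) :
    ∫⁻ x : Fin n → ℝ, ENNReal.ofReal (Real.exp (n * t * Real.log (ratioAGM p x))) *
      ENNReal.ofReal (pNorm p x ^ (n * t) * Real.exp (-pNorm p x ^ p)) =
        ENNReal.ofReal ((n : ℝ) ^ (n * t / p) * (2 / p * Real.Gamma ((1 + t) / p)) ^ n) := by
  have hae : ∀ᵐ x : Fin n → ℝ, ENNReal.ofReal (Real.exp (n * t * Real.log (ratioAGM p x))) *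
      ENNReal.ofReal (pNorm p x ^ (n * t) * Real.exp (-pNorm p x ^ p)) =
        ENNReal.ofReal ((n : ℝ) ^ (n * t / p)) *
          ENNReal.ofReal (∏ i, (|x i| ^ t * Real.exp (-|x i| ^ p))) := by
    filter_upwards [ae_forall_apply_ne_zero] with x hx
    rw [← ENNReal.ofReal_mul (by positivity), exp_log_ratioAGM_mul_pNorm_rpow_mul_exp hp.ne' hn
      hx, ENNReal.ofReal_mul (by positivity)]
  rw [lintegral_congr_ae hae, lintegral_const_mul' _ _ ENNReal.ofReal_ne_top,
    lintegral_prod_abs_rpow_mul_exp_neg_abs_rpow hp ht, Fintype.card_fin,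
    ← ENNReal.ofReal_mul (by positivity)]

lemma setLIntegral_unitBallp_exp_log_ratioAGM (hp : 0 < p) (ht : -1 < t) (hn : n ≠ 0) :
    ∫⁻ x in unitBallp n p, ENNReal.ofReal (Real.exp (n * t * Real.log (ratioAGM p x))) =
      ENNReal.ofReal ((n : ℝ) ^ (n * t / p) * (2 / p * Real.Gamma ((1 + t) / p)) ^ n /
        (n / p * Real.Gamma (n * ((1 + t) / p)))) := by
  have hn0 : 0 < (n : ℝ) := Nat.cast_pos.2 hn.pos
  have hmeas : Measurable (ratioAGM p : (Fin n → ℝ) → ℝ) := measurable_ratioAGM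
  have hden : 0 < n / p * Real.Gamma (n * ((1 + t) / p)) :=
    mul_pos (div_pos hn0 hp) (Real.Gamma_pos_of_pos (mul_pos hn0 (div_pos (by linarith) hp)))
  rw [ENNReal.ofReal_div_of_pos hden,
    ← lintegral_exp_log_ratioAGM_mul_pNorm_rpow_mul_exp hp ht hn,
    ENNReal.eq_div_iff (ENNReal.ofReal_pos.2 hden).ne' ENNReal.ofReal_ne_top,
    lintegral_mul_pNorm_rpow_mul_exp_neg hp hn (by nlinarith) (by fun_prop)
      (fun r hr x => by rw [ratioAGM_smul hp.ne' hn hr])]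
  congr 4
  ring

end LpBall

section ConeMeasure

variable {n : ℕ} {p : ℝ} {S : Set (Fin n → ℝ)}

lemma coneOf_inter_unitSpherep_ae_eq (hp : p ≠ 0) (hn : n ≠ 0)
    (hS : ∀ r > (0 : ℝ), ∀ x, r • x ∈ S ↔ x ∈ S) :
    coneOf (S ∩ unitSpherep n p) =ᵐ[volume] (unitBallp n p ∩ S : Set (Fin n → ℝ)) := by
  have : NeZero n := ⟨hn⟩
  filter_upwards [Measure.ae_ne volume (0 : Fin n → ℝ)] with y hy
  refine propext ⟨?_, fun ⟨hyball, hyS⟩ => ?_⟩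
  · rintro ⟨r, hr, x, ⟨hxS, hx : pNorm p x = 1⟩, rfl⟩
    have hr0 : 0 < r := hr.1.lt_of_ne fun h => hy (by simp [← h])
    refine ⟨?_, (hS r hr0 x).2 hxS⟩
    change pNorm p (r • x) ≤ 1
    rw [pNorm_smul hp hr.1, hx, mul_one]
    exact hr.2
  · have hpos : 0 < pNorm p y := pNorm_pos hy
    refine ⟨pNorm p y, ⟨hpos.le, hyball⟩, (pNorm p y)⁻¹ • y,
      ⟨(hS _ (inv_pos.2 hpos) y).2 hyS, ?_⟩, by rw [smul_inv_smul₀ hpos.ne']⟩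
    change pNorm p _ = 1
    rw [pNorm_smul hp (inv_pos.2 hpos).le, inv_mul_cancel₀ hpos.ne']

lemma IsConeMeasure.apply_eq_cond {C : Measure (Fin n → ℝ)} (hC : IsConeMeasure n p C)
    (hp : p ≠ 0) (hn : n ≠ 0) (hSm : MeasurableSet S)
    (hS : ∀ r > (0 : ℝ), ∀ x, r • x ∈ S ↔ x ∈ S) :
    C S = volume[|unitBallp n p] S := by
  rw [← measure_inter_conull hC.2.1, hC.2.2 _ (hSm.inter measurableSet_unitSpherep)
    inter_subset_right, measure_congr (coneOf_inter_unitSpherep_ae_eq hp hn hS),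
    cond_apply measurableSet_unitBallp, ENNReal.div_eq_inv_mul]

namespace HasConeDirDist

variable {Ω : Type*} [MeasurableSpace Ω] {P : Measure Ω} {X : Ω → Fin n → ℝ}

lemma aemeasurable (hX : HasConeDirDist n p P X) : AEMeasurable X P := by
  obtain ⟨μR, C, hμR, -, -, ⟨hC, -, -⟩, hmap⟩ := hX
  refine AEMeasurable.of_map_ne_zero ?_
  rw [hmap, Ne, Measure.map_eq_zero_iff (by fun_prop)]
  exact IsProbabilityMeasure.ne_zero _

lemma measure_preimage_eq_cond (hX : HasConeDirDist n p P X) (hp : p ≠ 0) (hn : n ≠ 0)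
    (hSm : MeasurableSet S) (hS : ∀ r > (0 : ℝ), ∀ x, r • x ∈ S ↔ x ∈ S) :
    P (X ⁻¹' S) = volume[|unitBallp n p] S := by
  have hXm := hX.aemeasurable
  obtain ⟨μR, C, hμR, hIcc, hzero, hC, hmap⟩ := hX
  have : IsProbabilityMeasure C := hC.1
  have hpos : ∀ᵐ r ∂μR, 0 < r := by
    filter_upwards [show ∀ᵐ r ∂μR, r ∈ Icc (0 : ℝ) 1 from hIcc,
      measure_eq_zero_iff_ae_notMem.1 hzero] with r hr hr0
    exact hr.1.lt_of_ne (Ne.symm hr0)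
  have hray : (fun rz : ℝ × (Fin n → ℝ) => rz.1 • rz.2) ⁻¹' S =ᵐ[μR.prod C] univ ×ˢ S := by
    filter_upwards [Measure.quasiMeasurePreserving_fst.ae hpos] with rz hrz
    refine propext ((hS rz.1 hrz rz.2).trans ?_)
    exact (and_iff_right (mem_univ rz.1)).symm
  rw [← Measure.map_apply_of_aemeasurable hXm hSm, hmap, Measure.map_apply (by fun_prop) hSm,
    measure_congr hray, Measure.prod_prod, measure_univ, one_mul,
    hC.apply_eq_cond hp hn hSm hS]

end HasConeDirDist

end ConeMeasure

section RatioLaw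

/-- The law of the ratio `ratioAGM p` under the uniform distribution on the unit ball of `ℓ_p^n`,
which is also its law under every distribution with directional distribution `C_{n,p}`. -/
def ratioLaw (p : ℝ) (n : ℕ) : Measure ℝ :=
  (volume[|unitBallp n p]).map (ratioAGM p)

variable {n : ℕ} {p t : ℝ}

lemma HasConeDirDist.measure_ratioAGM_mem {Ω : Type*} [MeasurableSpace Ω] {P : Measure Ω}
    {X : Ω → Fin n → ℝ} (hX : HasConeDirDist n p P X) (hp : p ≠ 0) (hn : n ≠ 0) {A : Set ℝ}
    (hA : MeasurableSet A) : P {ω | ratioAGM p (X ω) ∈ A} = ratioLaw p n A := by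
  rw [ratioLaw, Measure.map_apply measurable_ratioAGM hA]
  refine hX.measure_preimage_eq_cond hp hn (measurable_ratioAGM hA) fun r hr x => ?_
  rw [mem_preimage, mem_preimage, ratioAGM_smul hp hn hr]

lemma ae_ratioLaw_pos (hn : n ≠ 0) : ∀ᵐ θ ∂(ratioLaw p n), 0 < θ := by
  rw [ratioLaw, ae_map_iff measurable_ratioAGM.aemeasurable measurableSet_Ioi]
  filter_upwards [cond_absolutelyContinuous.ae_le ae_forall_apply_ne_zero] with x hx
  exact ratioAGM_pos hn hx

/-- The limit `Λ t` of `n⁻¹ log E[R_n ^ (n t)]` for `t > -1`. -/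
def limitCGF (p t : ℝ) : ℝ := stirlingRemainder ((1 + t) / p) - stirlingRemainder (1 / p)

-- The linear and logarithmic parts of `log Γ` cancel; only the Stirling remainders survive.
lemma Gamma_div_eq_exp (hp : 0 < p) (ht : -1 < t) (hn : n ≠ 0) :
    (n : ℝ) ^ (n * t / p) * (Real.Gamma ((1 + t) / p) / Real.Gamma (1 / p)) ^ n *
        (Real.Gamma (n * (1 / p)) / Real.Gamma (n * ((1 + t) / p))) =
      Real.exp (n * limitCGF p t +
        (stirlingRemainder (n * (1 / p)) - stirlingRemainder (n * ((1 + t) / p)))) := by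
  have hn0 : 0 < (n : ℝ) := Nat.cast_pos.2 hn.pos
  have ha : 0 < (1 + t) / p := div_pos (by linarith) hp
  have hb : 0 < 1 / p := one_div_pos.2 hp
  rw [Gamma_eq_exp_stirlingRemainder ha, Gamma_eq_exp_stirlingRemainder hb,
    Gamma_eq_exp_stirlingRemainder (mul_pos hn0 ha),
    Gamma_eq_exp_stirlingRemainder (mul_pos hn0 hb), ← Real.exp_sub, ← Real.exp_sub,
    ← Real.exp_nat_mul, Real.rpow_def_of_pos hn0, ← Real.exp_add, ← Real.exp_add, limitCGF,
    Real.log_mul hn0.ne' ha.ne', Real.log_mul hn0.ne' hb.ne']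
  congr 1
  ring

lemma volume_unitBallp (hp : 0 < p) (hn : n ≠ 0) :
    volume (unitBallp n p) = ENNReal.ofReal ((2 / p * Real.Gamma (1 / p)) ^ n /
      (n / p * Real.Gamma (n * (1 / p)))) := by
  simpa using setLIntegral_unitBallp_exp_log_ratioAGM (t := 0) hp (by norm_num) hn

lemma lintegral_ratioLaw_exp_log (hp : 0 < p) (ht : -1 < t) (hn : n ≠ 0) :
    ∫⁻ θ, ENNReal.ofReal (Real.exp (n * t * Real.log θ)) ∂(ratioLaw p n) =
      ENNReal.ofReal (Real.exp (n * limitCGF p t +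
        (stirlingRemainder (n * (1 / p)) - stirlingRemainder (n * ((1 + t) / p))))) := by
  have hn0 : 0 < (n : ℝ) := Nat.cast_pos.2 hn.pos
  have : 0 < Real.Gamma (n * ((1 + t) / p)) :=
    Real.Gamma_pos_of_pos (mul_pos hn0 (div_pos (by linarith) hp))
  have : 0 < Real.Gamma (1 / p) := Real.Gamma_pos_of_pos (one_div_pos.2 hp)
  have : 0 < Real.Gamma (n * (1 / p)) :=
    Real.Gamma_pos_of_pos (mul_pos hn0 (one_div_pos.2 hp))
  rw [ratioLaw, lintegral_map (by fun_prop) measurable_ratioAGM, ProbabilityTheory.cond,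
    lintegral_smul_measure, smul_eq_mul, setLIntegral_unitBallp_exp_log_ratioAGM hp ht hn,
    volume_unitBallp hp hn, ← ENNReal.ofReal_inv_of_pos (by positivity),
    ← ENNReal.ofReal_mul (by positivity), ← Gamma_div_eq_exp hp ht hn]
  congr 1
  rw [div_pow, mul_pow, mul_pow]
  field_simp

lemma hasScaledCGFAt_ratioLaw (hp : 0 < p) (ht : -1 < t) :
    HasScaledCGFAt (ratioLaw p) (fun _ => Real.log) t (limitCGF p t) := by
  have hlim : Tendsto (fun n : ℕ => limitCGF p t + (stirlingRemainder (n * (1 / p)) / n -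
      stirlingRemainder (n * ((1 + t) / p)) / n)) atTop (𝓝 (limitCGF p t)) := by
    simpa using ((tendsto_stirlingRemainder_natCast_mul_div (one_div_pos.2 hp)).sub
      (tendsto_stirlingRemainder_natCast_mul_div (div_pos (neg_lt_iff_pos_add'.1 ht) hp))).const_add
        (limitCGF p t)
  refine (EReal.tendsto_coe.2 hlim).congr' ?_
  filter_upwards [eventually_ne_atTop 0] with n hn
  rw [lintegral_ratioLaw_exp_log hp ht hn, ← EReal.exp_coe, EReal.log_exp, ← EReal.coe_natCast,
    ← EReal.coe_div]
  congr 1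
  field_simp

end RatioLaw

section RateFunction

variable {p θ t : ℝ}

lemma hasDerivAt_limitCGF (hp : 0 < p) (ht : -1 < t) :
    HasDerivAt (limitCGF p) (Hfun ((1 + t) / p) / p) t := by
  have hline : HasDerivAt (fun t : ℝ => (1 + t) / p) (1 / p) t :=
    ((hasDerivAt_id t).const_add 1).div_const p
  have hS := hasDerivAt_stirlingRemainder (div_pos (neg_lt_iff_pos_add'.1 ht) hp)
  rw [← mul_one_div]
  exact (hS.comp t hline).sub_const _

lemma mul_log_neg (hp : 0 < p) (hθ : θ ∈ Ioo (0 : ℝ) 1) : p * Real.log θ < 0 :=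
  mul_neg_of_pos_of_neg hp (Real.log_neg hθ.1 hθ.2)

lemma Gfun_pos (hp : 0 < p) (hθ : θ ∈ Ioo (0 : ℝ) 1) : 0 < Gfun p θ :=
  Hinv_pos (mul_log_neg hp hθ)

lemma Hfun_Gfun (hp : 0 < p) (hθ : θ ∈ Ioo (0 : ℝ) 1) : Hfun (Gfun p θ) = p * Real.log θ :=
  Hfun_Hinv (mul_log_neg hp hθ)

/-- The tilting parameter `p G_p(θ) - 1` at which the slope of `limitCGF p` is `log θ`. -/
def tilt (p θ : ℝ) : ℝ := p * Gfun p θ - 1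

lemma one_add_tilt_div (hp : p ≠ 0) (θ : ℝ) : (1 + tilt p θ) / p = Gfun p θ := by
  rw [tilt, add_sub_cancel, mul_div_cancel_left₀ _ hp]

lemma neg_one_lt_tilt (hp : 0 < p) (hθ : θ ∈ Ioo (0 : ℝ) 1) : -1 < tilt p θ := by
  rw [tilt, neg_lt_sub_iff_lt_add, lt_add_iff_pos_right]
  exact mul_pos hp (Gfun_pos hp hθ)

lemma hasDerivAt_limitCGF_tilt (hp : 0 < p) (hθ : θ ∈ Ioo (0 : ℝ) 1) :
    HasDerivAt (limitCGF p) (Real.log θ) (tilt p θ) := by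
  have h := hasDerivAt_limitCGF hp (neg_one_lt_tilt hp hθ)
  rwa [one_add_tilt_div hp.ne', Hfun_Gfun hp hθ, mul_div_cancel_left₀ _ hp.ne'] at h

lemma limitCGF_tilt_sub (hp : p ≠ 0) (θ : ℝ) :
    limitCGF p (tilt p θ) - tilt p θ * Real.log θ = -ratefn p θ := by
  rw [limitCGF, one_add_tilt_div hp, stirlingRemainder, stirlingRemainder, ratefn, tilt,
    Real.log_div one_ne_zero hp, Real.log_one]
  ring

lemma mul_mConst (hp : p ≠ 0) : p * mConst p = Hfun (1 / p) := by
  rw [mConst, Hfun, ← mul_assoc, mul_one_div_cancel hp, one_mul, Real.log_div one_ne_zero hp,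
    Real.log_one, zero_sub, sub_neg_eq_add]

lemma exp_mConst_mem_Ioo (hp : 0 < p) : Real.exp (mConst p) ∈ Ioo (0 : ℝ) 1 := by
  have hneg : p * mConst p < 0 := mul_mConst hp.ne' ▸ Hfun_neg (one_div_pos.2 hp)
  exact ⟨Real.exp_pos _, Real.exp_lt_one_iff.2 (neg_of_mul_neg_right hneg hp.le)⟩

lemma strictMonoOn_tilt (hp : 0 < p) : StrictMonoOn (tilt p) (Ioo 0 1) := by
  intro θ hθ θ' hθ' hlt
  refine sub_lt_sub_right (mul_lt_mul_of_pos_left ?_ hp) 1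
  rw [← Hfun_strictMonoOn.lt_iff_lt (Gfun_pos hp hθ) (Gfun_pos hp hθ'), Hfun_Gfun hp hθ,
    Hfun_Gfun hp hθ']
  exact mul_lt_mul_of_pos_left (Real.log_lt_log hθ.1 hlt) hp

lemma tilt_exp_mConst (hp : 0 < p) : tilt p (Real.exp (mConst p)) = 0 := by
  rw [tilt, Gfun, Real.log_exp, mul_mConst hp.ne', Hinv_Hfun (one_div_pos.2 hp),
    mul_one_div_cancel hp.ne', sub_self]

lemma tilt_nonpos (hp : 0 < p) (hθ : θ ∈ Ioo (0 : ℝ) 1) (h : θ ≤ Real.exp (mConst p)) :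
    tilt p θ ≤ 0 :=
  ((strictMonoOn_tilt hp).monotoneOn hθ (exp_mConst_mem_Ioo hp) h).trans_eq (tilt_exp_mConst hp)

lemma tilt_nonneg (hp : 0 < p) (hθ : θ ∈ Ioo (0 : ℝ) 1) (h : Real.exp (mConst p) ≤ θ) :
    0 ≤ tilt p θ :=
  (tilt_exp_mConst hp).symm.trans_le
    ((strictMonoOn_tilt hp).monotoneOn (exp_mConst_mem_Ioo hp) hθ h)

lemma tendsto_limitCGF_mul_natCast_sub_one (hp : p ≠ 0) :
    Tendsto (fun N : ℕ => limitCGF p (p * N - 1)) atTop atBot := by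
  refine (tendsto_atBot_add_const_right atTop (-stirlingRemainder (1 / p))
    tendsto_stirlingRemainder_natCast).congr fun N => ?_
  rw [limitCGF, add_sub_cancel, mul_div_cancel_left₀ _ hp, sub_eq_add_neg]

end RateFunction

section LargeDeviations

open ExpGrowth

variable {p : ℝ}

lemma eventually_ratioLaw_le {A B : Set ℝ} (h : ∀ θ ∈ A, 0 < θ → θ ∈ B) :
    ∀ᶠ n in atTop, ratioLaw p n A ≤ ratioLaw p n B := by
  filter_upwards [eventually_ne_atTop 0] with n hn
  exact measure_mono_ae ((ae_ratioLaw_pos hn).mono fun θ hθ hA => h θ hA hθ)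

lemma expGrowthSup_ratioLaw_le {t a : ℝ} (hp : 0 < p) (ht : -1 < t) {A : Set ℝ}
    (hA : ∀ θ ∈ A, 0 < θ → a ≤ t * Real.log θ) :
    expGrowthSup (fun n => ratioLaw p n A) ≤ ((limitCGF p t - a : ℝ) : EReal) :=
  (expGrowthSup_eventually_monotone
    (eventually_ratioLaw_le (B := A ∩ Ioi 0) fun _ hθ hpos => ⟨hθ, hpos⟩)).trans
    ((hasScaledCGFAt_ratioLaw hp ht).chernoff_expGrowthSup_le (S := fun _ => A ∩ Ioi 0)
      (fun _ => Real.measurable_log.aemeasurable) fun _ _ hθ => hA _ hθ.1 hθ.2)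

lemma expGrowthSup_ratioLaw_le_neg_ratefnExt {θ : ℝ} (hp : 0 < p) (hθ : θ ∈ Ioo (0 : ℝ) 1)
    {A : Set ℝ} (hA : ∀ η ∈ A, 0 < η → tilt p θ * Real.log θ ≤ tilt p θ * Real.log η) :
    expGrowthSup (fun n => ratioLaw p n A) ≤ -ratefnExt p θ := by
  rw [ratefnExt, if_pos hθ, ← EReal.coe_neg, ← limitCGF_tilt_sub hp.ne']
  exact expGrowthSup_ratioLaw_le hp (neg_one_lt_tilt hp hθ) hA

lemma expGrowthSup_ratioLaw_Iic_le {a : ℝ} (hp : 0 < p) (ha : a ≤ Real.exp (mConst p)) :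
    expGrowthSup (fun n => ratioLaw p n (Iic a)) ≤ -ratefnExt p a := by
  rcases le_or_gt a 0 with ha₀ | ha₀
  · have hempty : ∀ᶠ n in atTop, ratioLaw p n (Iic a) ≤ ratioLaw p n ∅ :=
      eventually_ratioLaw_le fun θ hθ hpos => (hpos.not_ge (hθ.trans ha₀)).elim
    simp only [measure_empty] at hempty
    exact (expGrowthSup_eventually_monotone hempty).trans (expGrowthSup_zero.trans_le bot_le)
  · have haI : a ∈ Ioo (0 : ℝ) 1 := ⟨ha₀, ha.trans_lt (exp_mConst_mem_Ioo hp).2⟩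
    refine expGrowthSup_ratioLaw_le_neg_ratefnExt hp haI fun θ hθ hpos => ?_
    exact mul_le_mul_of_nonpos_left (Real.log_le_log hpos hθ) (tilt_nonpos hp haI ha)

lemma expGrowthSup_ratioLaw_Ici_one (hp : 0 < p) :
    expGrowthSup (fun n => ratioLaw p n (Ici 1)) = ⊥ := by
  refine le_bot_iff.1 (ge_of_tendsto
    (EReal.tendsto_coe_nhds_bot_iff.2 (tendsto_limitCGF_mul_natCast_sub_one hp.ne')) ?_)
  have hlarge : Tendsto (fun N : ℕ => p * N) atTop atTop :=
    tendsto_natCast_atTop_atTop.const_mul_atTop hp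
  filter_upwards [hlarge.eventually_ge_atTop 1] with N hN
  rw [← sub_zero (limitCGF p _)]
  exact expGrowthSup_ratioLaw_le hp (by linarith) fun θ hθ _ =>
    mul_nonneg (sub_nonneg.2 hN) (Real.log_nonneg hθ)

lemma expGrowthSup_ratioLaw_Ici_le {b : ℝ} (hp : 0 < p) (hb : Real.exp (mConst p) ≤ b) :
    expGrowthSup (fun n => ratioLaw p n (Ici b)) ≤ -ratefnExt p b := by
  have hb₀ : 0 < b := (Real.exp_pos _).trans_le hb
  rcases le_or_gt 1 b with hb₁ | hb₁
  · exact (expGrowthSup_monotone fun n => measure_mono (Ici_subset_Ici.2 hb₁)).trans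
      ((expGrowthSup_ratioLaw_Ici_one hp).trans_le bot_le)
  · refine expGrowthSup_ratioLaw_le_neg_ratefnExt hp ⟨hb₀, hb₁⟩ fun θ hθ _ => ?_
    exact mul_le_mul_of_nonneg_left (Real.log_le_log hb₀ hθ) (tilt_nonneg hp ⟨hb₀, hb₁⟩ hb)

lemma neg_ratefnExt_le_expGrowthInf_ratioLaw {θ : ℝ} (hp : 0 < p) {A : Set ℝ}
    (hA : θ ∈ Ioo (0 : ℝ) 1 → A ∈ 𝓝 θ) :
    -ratefnExt p θ ≤ expGrowthInf (fun n => ratioLaw p n A) := by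
  by_cases hθ : θ ∈ Ioo (0 : ℝ) 1
  · have hexp : Real.exp ⁻¹' A ∈ 𝓝 (Real.log θ) :=
      Real.continuous_exp.continuousAt.preimage_mem_nhds (by rw [Real.exp_log hθ.1]; exact hA hθ)
    have hCGF : ∀ᶠ t in 𝓝 (tilt p θ),
        HasScaledCGFAt (ratioLaw p) (fun _ => Real.log) t (limitCGF p t) := by
      filter_upwards [lt_mem_nhds (neg_one_lt_tilt hp hθ)] with t ht
      exact hasScaledCGFAt_ratioLaw hp ht
    rw [ratefnExt, if_pos hθ, ← EReal.coe_neg, ← limitCGF_tilt_sub hp.ne']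
    refine (HasScaledCGFAt.gartnerEllis_le_expGrowthInf
      (fun _ => Real.measurable_log.aemeasurable) hCGF (hasDerivAt_limitCGF_tilt hp hθ)
      hexp).trans (expGrowthInf_eventually_monotone (eventually_ratioLaw_le fun η hη hpos => ?_))
    rwa [mem_preimage, mem_preimage, Real.exp_log hpos] at hη
  · rw [ratefnExt, if_neg hθ, EReal.neg_top]
    exact bot_le

lemma neg_iInf_ratefnExt_le_expGrowthInf_ratioLaw (hp : 0 < p) {U : Set ℝ} (hU : IsOpen U) :
    -⨅ θ ∈ Icc 0 1 ∩ U, ratefnExt p θ ≤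
      expGrowthInf (fun n => ratioLaw p n (Icc 0 1 ∩ U)) := by
  refine EReal.neg_le.2 (le_iInf₂ fun θ hθ => EReal.neg_le.2 ?_)
  exact neg_ratefnExt_le_expGrowthInf_ratioLaw hp fun hθI =>
    inter_mem (Icc_mem_nhds hθI.1 hθI.2) (hU.mem_nhds hθ.2)

end LargeDeviations

theorem statement4_general (p : ℝ) (hp : 0 < p)
    (Ω : ℕ → Type*) [∀ n, MeasurableSpace (Ω n)]
    (P : ∀ n, Measure (Ω n))
    (X : ∀ n, Ω n → Fin n → ℝ)
    (hX : ∀ n, 1 ≤ n → HasConeDirDist n p (P n) (X n)) :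
    (∀ A : Set ℝ, A ⊆ Icc 0 1 →
      IsClosed ((fun x : Icc (0:ℝ) 1 => (x : ℝ)) ⁻¹' A) →
      Filter.limsup
          (fun n : ℕ => (((n : ℝ)⁻¹ : ℝ) : EReal) *
            ENNReal.log ((P n) {ω | ratioAGM p (X n ω) ∈ A})) atTop
        ≤ - ⨅ θ ∈ A, ratefnExt p θ) ∧
    (∀ A : Set ℝ, A ⊆ Icc 0 1 →
      IsOpen ((fun x : Icc (0:ℝ) 1 => (x : ℝ)) ⁻¹' A) →
      - ⨅ θ ∈ A, ratefnExt p θ ≤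
        Filter.liminf
          (fun n : ℕ => (((n : ℝ)⁻¹ : ℝ) : EReal) *
            ENNReal.log ((P n) {ω | ratioAGM p (X n ω) ∈ A})) atTop) := by
  have hlaw (A : Set ℝ) (hA : MeasurableSet A) : ∀ᶠ n : ℕ in atTop, (((n : ℝ)⁻¹ : ℝ) : EReal) *
      ENNReal.log (P n {ω | ratioAGM p (X n ω) ∈ A}) = ENNReal.log (ratioLaw p n A) / n := by
    filter_upwards [eventually_ge_atTop 1] with n hn
    rw [inv_natCast_mul_log_eq_div,
      (hX n hn).measure_ratioAGM_mem hp.ne' (Nat.one_le_iff_ne_zero.1 hn) hA]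
  constructor
  · intro A hA₀₁ hA
    have hA' : IsClosed A := by
      have h := isClosed_Icc.isClosedEmbedding_subtypeVal.isClosedMap _ hA
      rwa [Subtype.image_preimage_coe, inter_eq_right.2 hA₀₁] at h
    exact (limsup_congr (hlaw A hA'.measurableSet)).trans_le
      (expGrowthSup_le_neg_iInf_of_isClosed (fun _ => expGrowthSup_ratioLaw_Iic_le hp)
        (fun _ => expGrowthSup_ratioLaw_Ici_le hp) hA')
  · intro A hA₀₁ hA
    obtain ⟨U, hU, hUA⟩ := isOpen_induced_iff.1 hA
    obtain rfl : A = Icc 0 1 ∩ U := by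
      rw [← inter_eq_right.2 hA₀₁]
      exact (Subtype.preimage_coe_eq_preimage_coe_iff.1 hUA).symm
    exact (neg_iInf_ratefnExt_le_expGrowthInf_ratioLaw hp hU).trans_eq
      (liminf_congr (hlaw _ (measurableSet_Icc.inter hU.measurableSet))).symm

/-- Proposition 2.2: the sequence `(R_n)` satisfies an LDP on `[0,1]` with
speed `n` and rate function `I_p` (extended by `+∞` outside `(0,1)`): an upper bound for
sets that are closed in `[0,1]` and a lower bound for sets that are open in `[0,1]`. -/
theorem statement4 (p : ℝ) (hp : 1 ≤ p)
    (Ω : ℕ → Type) [∀ n, MeasurableSpace (Ω n)]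
    (P : ∀ n, Measure (Ω n)) [∀ n, IsProbabilityMeasure (P n)]
    (X : ∀ n, Ω n → Fin n → ℝ)
    (hX : ∀ n, 1 ≤ n → HasConeDirDist n p (P n) (X n)) :
    (∀ A : Set ℝ, A ⊆ Icc 0 1 →
      IsClosed ((fun x : Icc (0:ℝ) 1 => (x : ℝ)) ⁻¹' A) →
      Filter.limsup
          (fun n : ℕ => (((n : ℝ)⁻¹ : ℝ) : EReal) *
            ENNReal.log ((P n) {ω | ratioAGM p (X n ω) ∈ A})) atTop
        ≤ - ⨅ θ ∈ A, ratefnExt p θ) ∧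
    (∀ A : Set ℝ, A ⊆ Icc 0 1 →
      IsOpen ((fun x : Icc (0:ℝ) 1 => (x : ℝ)) ⁻¹' A) →
      - ⨅ θ ∈ A, ratefnExt p θ ≤
        Filter.liminf
          (fun n : ℕ => (((n : ℝ)⁻¹ : ℝ) : EReal) *
            ENNReal.log ((P n) {ω | ratioAGM p (X n ω) ∈ A})) atTop) :=
  statement4_general p (by linarith) Ω P X hX
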